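/- Let Σ_V, Σ_E be label sets with positive semidefinite kernels k_V and k_E, let ℓ ∈ ℕ, and let λ₀,…,λ_ℓ ≥ 0 be weights. For finite labeled graphs G, H let K^=_i(G,H) be the i-walk kernel (the sum over all pairs of length-i walks of the product of the vertex kernels on corresponding vertex labels and edge kernels on corresponding edge labels). Then the Max-ℓ-walk kernel K^≤_ℓ(G,H) = Σ_{i=0}^{ℓ} λᵢ K^=_i(G,H) is positive semidefinite: for every finite family of labeled graphs G₁,…,Gₙ and all c₁,…,cₙ ∈ ℝ, Σᵢ Σⱼ cᵢ cⱼ K^≤_ℓ(Gᵢ,Gⱼ) ≥ 0. -/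

import Mathlib

/-!
By the Schur product theorem, entrywise products of positive semidefinite matrices are positive
semidefinite. Pulling `kV` and `kE` back along the vertex and edge labels of vertex sequences and
multiplying, the Gram matrix of the walk weight is therefore positive semidefinite on *any* finite
family of vertex sequences (`walkWeight_posSemidef`), and in particular on all vertex sequences in
all graphs of the family at once. Evaluating its quadratic form at the vector whose entry at
`(G_i, w)` is `c i` if `w` is a walk of `G_i` and `0` otherwise gives exactly
`∑ i j, c i * c j * K^=_t(G_i, G_j)` (`walkKernel_quadForm_nonneg`). The kernel of the theorem is a
combination of these with nonnegative coefficients.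
-/

/-- A positive semidefinite kernel on a set `X`: a symmetric real-valued function
all of whose finite Gram matrices are positive semidefinite. -/
def IsPSDKernel {X : Type*} (k : X → X → ℝ) : Prop :=
  (∀ x y, k x y = k y x) ∧
  ∀ (n : ℕ) (x : Fin n → X) (c : Fin n → ℝ),
    0 ≤ ∑ i, ∑ j, c i * c j * k (x i) (x j)

/-- A labeled graph: a simple graph on a finite vertex set together with a
vertex labeling into `SV` and an edge labeling into `SE` (given as a labeling
of unordered vertex pairs; only its values on edges are ever used). -/
structure LabeledGraph (SV SE : Type*) where
  V : Type
  [fintypeV : Fintype V]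
  G : SimpleGraph V
  labV : V → SV
  labE : Sym2 V → SE

attribute [instance] LabeledGraph.fintypeV

/-- `w : Fin (ℓ+1) → G.V` is (the vertex sequence of) a walk of length `ℓ` in
`G`: consecutive vertices are adjacent. -/
def LabeledGraph.IsWalk {SV SE : Type*} (G : LabeledGraph SV SE) {ℓ : ℕ}
    (w : Fin (ℓ + 1) → G.V) : Prop :=
  ∀ i : Fin ℓ, G.G.Adj (w i.castSucc) (w i.succ)

open Classical in
/-- The `i`-walk kernel `K^=_i(G,H) = Σ_{w ∈ W_i(G)} Σ_{w' ∈ W_i(H)} k_W(w,w')`,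
where for walks `w = (v₀,e₁,…,v_i)` and `w' = (v₀',e₁',…,v_i')`,
`k_W(w,w') = Π_{j=0}^{i} k_V(lab(vⱼ),lab(vⱼ')) · Π_{j=1}^{i} k_E(lab(eⱼ),lab(eⱼ'))`. -/
noncomputable def walkKernel {SV SE : Type*} (kV : SV → SV → ℝ)
    (kE : SE → SE → ℝ) (ℓ : ℕ) (G H : LabeledGraph SV SE) : ℝ :=
  ∑ w : Fin (ℓ + 1) → G.V, ∑ w' : Fin (ℓ + 1) → H.V,
    if G.IsWalk w ∧ H.IsWalk w' then
      (∏ i : Fin (ℓ + 1), kV (G.labV (w i)) (H.labV (w' i))) *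
      (∏ i : Fin ℓ, kE (G.labE s(w i.castSucc, w i.succ))
                       (H.labE s(w' i.castSucc, w' i.succ)))
    else 0

/-- A positive semidefinite kernel, pulled back along any map from a finite type, gives a positive
semidefinite matrix. -/
theorem IsPSDKernel.posSemidef {X ι : Type*} [Fintype ι] {k : X → X → ℝ} (hk : IsPSDKernel k)
    (x : ι → X) : (Matrix.of fun a b => k (x a) (x b)).PosSemidef := by
  refine .of_dotProduct_mulVec_nonneg ?_ fun c => ?_
  · ext a b
    simpa using hk.1 (x b) (x a)
  · -- The quadratic form is that of a `Fin`-indexed family, after enumerating `ι`.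
    have e := (Fintype.equivFin ι).symm
    have h := hk.2 _ (x ∘ e) (c ∘ e)
    have key : star c ⬝ᵥ (Matrix.of fun a b => k (x a) (x b)).mulVec c
        = ∑ a, ∑ b, c a * c b * k (x a) (x b) := by
      simp only [dotProduct, Matrix.mulVec, Finset.mul_sum, Matrix.of_apply, Pi.star_apply,
        star_trivial]
      exact Finset.sum_congr rfl fun a _ => Finset.sum_congr rfl fun b _ => by ring
    rw [key, ← e.sum_comp]
    simpa only [← e.sum_comp (fun b => c (e _) * c b * k (x (e _)) (x b)), Function.comp_apply]
      using h

/-- Schur product theorem for finite products: an entrywise product of positive semidefinite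
matrices is positive semidefinite. The empty product is the all-ones matrix. -/
theorem posSemidef_prod {ι κ : Type*} [Finite ι] (s : Finset κ) (M : κ → ι → ι → ℝ)
    (hM : ∀ r, (Matrix.of (M r)).PosSemidef) :
    (Matrix.of fun a b => ∏ r ∈ s, M r a b).PosSemidef := by
  classical
  induction s using Finset.induction_on with
  | empty =>
    simpa [Matrix.vecMulVec] using Matrix.posSemidef_vecMulVec_self_star (fun _ : ι => (1 : ℝ))
  | insert r s hr ih =>
    simp only [Finset.prod_insert hr]
    exact (hM r).hadamard ih

/-- The walk weight is positive semidefinite on any finite family of vertex sequences `w a` in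
graphs `Gs a`, whether or not these sequences are walks. -/
theorem walkWeight_posSemidef {SV SE : Type*} {kV : SV → SV → ℝ} {kE : SE → SE → ℝ}
    (hV : IsPSDKernel kV) (hE : IsPSDKernel kE) (t : ℕ) {ι : Type*} [Fintype ι]
    (Gs : ι → LabeledGraph SV SE) (w : ∀ a, Fin (t + 1) → (Gs a).V) :
    (Matrix.of fun a b =>
      (∏ r : Fin (t + 1), kV ((Gs a).labV (w a r)) ((Gs b).labV (w b r))) *
      (∏ r : Fin t, kE ((Gs a).labE s(w a r.castSucc, w a r.succ))
                       ((Gs b).labE s(w b r.castSucc, w b r.succ)))).PosSemidef :=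
  (posSemidef_prod Finset.univ _ fun r : Fin (t + 1) =>
    hV.posSemidef fun a => (Gs a).labV (w a r)).hadamard
    (posSemidef_prod Finset.univ _ fun r : Fin t =>
      hE.posSemidef fun a => (Gs a).labE s(w a r.castSucc, w a r.succ))

/-- The walk kernel of a fixed length is positive semidefinite. -/
theorem walkKernel_quadForm_nonneg {SV SE : Type*} {kV : SV → SV → ℝ} {kE : SE → SE → ℝ}
    (hV : IsPSDKernel kV) (hE : IsPSDKernel kE) (t n : ℕ)
    (Gs : Fin n → LabeledGraph SV SE) (c : Fin n → ℝ) :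
    0 ≤ ∑ i, ∑ j, c i * c j * walkKernel kV kE t (Gs i) (Gs j) := by
  classical
  have h := (walkWeight_posSemidef hV hE t
    (fun a : Σ i : Fin n, (Fin (t + 1) → (Gs i).V) => Gs a.1)
    (fun a => a.2)).dotProduct_mulVec_nonneg
    (fun a => if (Gs a.1).IsWalk a.2 then c a.1 else 0)
  refine h.trans_eq ?_
  simp only [dotProduct, Matrix.mulVec, Finset.mul_sum, Matrix.of_apply, Pi.star_apply,
    star_trivial, Fintype.sum_sigma, walkKernel]
  refine Finset.sum_congr rfl fun i _ => ?_
  rw [Finset.sum_comm]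
  refine Finset.sum_congr rfl fun j _ => Finset.sum_congr rfl fun w _ =>
    Finset.sum_congr rfl fun w' _ => ?_
  by_cases h1 : (Gs i).IsWalk w
  · by_cases h2 : (Gs j).IsWalk w'
    · simp only [h1, h2, and_self, if_true]; ring
    · simp [h2]
  · simp [h1]

/-- If `k_V` and `k_E` are positive semidefinite kernels on the label sets and
`λ₀,…,λ_ℓ ≥ 0`, then the Max-`ℓ`-walk kernel
`K^≤_ℓ(G,H) = Σ_{i=0}^{ℓ} λᵢ K^=_i(G,H)` is positive semidefinite: every finite
Gram matrix on labeled graphs it produces is positive semidefinite. -/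
theorem max_walk_kernel_psd {SV SE : Type*} (kV : SV → SV → ℝ) (kE : SE → SE → ℝ)
    (hV : IsPSDKernel kV) (hE : IsPSDKernel kE) (ℓ : ℕ)
    (lam : Fin (ℓ + 1) → ℝ) (hlam : ∀ i, 0 ≤ lam i)
    (n : ℕ) (Gs : Fin n → LabeledGraph SV SE) (c : Fin n → ℝ) :
    0 ≤ ∑ i, ∑ j, c i * c j *
        ∑ t : Fin (ℓ + 1), lam t * walkKernel kV kE t (Gs i) (Gs j) := by
  have key : ∑ i, ∑ j, c i * c j * ∑ t : Fin (ℓ + 1), lam t * walkKernel kV kE t (Gs i) (Gs j)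
      = ∑ t : Fin (ℓ + 1), lam t * ∑ i, ∑ j, c i * c j * walkKernel kV kE t (Gs i) (Gs j) := by
    simp only [Finset.mul_sum]
    rw [Finset.sum_comm (s := (Finset.univ : Finset (Fin (ℓ + 1))))]
    refine Finset.sum_congr rfl fun i _ => ?_
    rw [Finset.sum_comm]
    exact Finset.sum_congr rfl fun t _ => Finset.sum_congr rfl fun j _ => by ring
  rw [key]
  exact Finset.sum_nonneg fun t _ =>
    mul_nonneg (hlam t) (walkKernel_quadForm_nonneg hV hE t n Gs c)
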